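/- arXiv:2205.04664 — 6 statements merged into one kernel-verified Lean document; each statement's English description precedes it below -/
import Mathlib

section
/- The intersection of the subspaces D_L over all subsets L of {1,…,n} with |L| = k+1 equals C. In other words, if t ∈ ℂ^n is such that every k+1 of the hyperplanes H_1^{t_1},…,H_n^{t_n} have a common point, then all n hyperplanes have a common point, i.e., the translated arrangement A^t is central. -/
open Matrix

/-- `Dsub k n α L` is the set of translations `t ∈ ℂⁿ` such that the affine hyperplanes
`H_i^{t_i} = {x : α_i ⬝ x = t_i}`, `i ∈ L`, have a common point. -/
def Dsub (k n : ℕ) (α : Fin n → Fin k → ℂ) (L : Finset (Fin n)) : Set (Fin n → ℂ) :=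
  {t | ∃ p : Fin k → ℂ, ∀ i ∈ L, α i ⬝ᵥ p = t i}

/-- `Ccen k n α` is the set of translations `t` for which the translated arrangement
`A^t` is central, i.e. all `n` hyperplanes have a common point. -/
def Ccen (k n : ℕ) (α : Fin n → Fin k → ℂ) : Set (Fin n → ℂ) :=
  {t | ∃ p : Fin k → ℂ, ∀ i, α i ⬝ᵥ p = t i}

/-- A vector is determined by its dot products against `k` linearly independent vectors
of a `k`-dimensional coordinate space. -/
theorem eq_of_dotProduct_eq_of_linearIndependent {K : Type*} [Field K] {k : ℕ} {ι : Type*}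
    [Fintype ι] {v : ι → Fin k → K} (hv : LinearIndependent K v) (hcard : Fintype.card ι = k)
    {p q : Fin k → K} (hpq : ∀ i, v i ⬝ᵥ p = v i ⬝ᵥ q) : p = q := by
  have hspan : Submodule.span K (Set.range v) = ⊤ :=
    hv.span_eq_top_of_card_eq_finrank' (by simpa using hcard)
  refine dotProduct_eq p q fun w => ?_
  have hw : w ∈ Submodule.span K (Set.range v) := hspan ▸ Submodule.mem_top
  rw [dotProduct_comm p, dotProduct_comm q]
  induction hw using Submodule.span_induction with
  | mem x hx => obtain ⟨i, rfl⟩ := hx; exact hpq i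
  | zero => simp
  | add x y _ _ hx hy => simp [add_dotProduct, hx, hy]
  | smul a x _ hx => simp [smul_dotProduct, hx]

theorem stmt_3 (k n : ℕ) (hk : 0 < k) (hkn : k < n)
    (α : Fin n → Fin k → ℂ)
    (hgen : ∀ S : Finset (Fin n), S.card = k →
      LinearIndependent ℂ (fun i : S => α i.1)) :
    (⋂ L : Finset (Fin n), ⋂ (_ : L.card = k + 1), Dsub k n α L) = Ccen k n α := by
  ext t
  simp only [Set.mem_iInter]
  refine ⟨fun h => ?_, fun ⟨p, hp⟩ L _ => ⟨p, fun i _ => hp i⟩⟩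
  obtain ⟨S, -, hS⟩ := Finset.exists_subset_card_eq
    (s := (Finset.univ : Finset (Fin n))) (n := k) (by simpa using hkn.le)
  have hsol : ∀ i ∉ S, ∃ p : Fin k → ℂ, (∀ s ∈ S, α s ⬝ᵥ p = t s) ∧ α i ⬝ᵥ p = t i := by
    intro i hi
    obtain ⟨p, hp⟩ := h (insert i S) (by rw [Finset.card_insert_of_notMem hi, hS])
    exact ⟨p, fun s hs => hp s (Finset.mem_insert_of_mem hs), hp i (Finset.mem_insert_self i S)⟩
  obtain ⟨j, hj⟩ : ∃ j, j ∉ S := by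
    by_contra! hall
    have : S = Finset.univ := Finset.eq_univ_iff_forall.mpr hall
    simp [this] at hS
    omega
  obtain ⟨p, hp, -⟩ := hsol j hj
  refine ⟨p, fun i => ?_⟩
  by_cases hi : i ∈ S
  · exact hp i hi
  · obtain ⟨q, hq, hqi⟩ := hsol i hi
    have hpq : p = q := eq_of_dotProduct_eq_of_linearIndependent (hgen S hS) (by simpa using hS)
      fun s => (hp s s.2).trans (hq s s.2).symm
    rw [hpq, hqi]
end

section
/- Let L_1,…,L_r be subsets of {1,…,n}, each of size k+1, fix i_0 ∈ {1,…,r}, and let t_1,…,t_d ∈ X := ⋂_{i=1}^r D_{L_i} be translations whose K_T-vector sets {v_{i_0,j}(t_h)}_{j≠i_0}, h = 1,…,d, are weakly linearly independent (i.e., Σ_{h=1}^d a_h v_{i_0,j}(t_h) = 0 for all j ≠ i_0 implies a_1 = … = a_d = 0). Then the ℂ-linear subspace X of ℂ^n has dimension at least k + d. -/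
open Matrix

/-- A vector orthogonal to at least `k` of the normals of a generic arrangement in `ℂᵏ` is zero. -/
lemma eq_zero_of_dotProduct_eq_zero_of_generic {k n : ℕ} {α : Fin n → Fin k → ℂ}
    (hgen : ∀ S : Finset (Fin n), S.card = k → LinearIndependent ℂ (fun i : S => α i.1))
    {S : Finset (Fin n)} (hS : k ≤ S.card) {y : Fin k → ℂ} (hy : ∀ p ∈ S, α p ⬝ᵥ y = 0) :
    y = 0 := by
  obtain ⟨T, hTS, hT⟩ := Finset.exists_subset_card_eq hS
  have hspan : Submodule.span ℂ (Set.range fun i : T => α i.1) = ⊤ :=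
    (hgen T hT).span_eq_top_of_card_eq_finrank' (by simp [hT])
  refine dotProduct_eq_zero y fun w => ?_
  have hw : w ∈ Submodule.span ℂ (Set.range fun i : T => α i.1) := hspan ▸ Submodule.mem_top
  rw [dotProduct_comm]
  induction hw using Submodule.span_induction with
  | mem x hx =>
    obtain ⟨i, rfl⟩ := hx
    exact hy i (hTS i.2)
  | zero => simp
  | add u v _ _ hu hv => rw [add_dotProduct, hu, hv, add_zero]
  | smul c u _ hu => rw [smul_dotProduct, hu, smul_zero]

/-- The set `Dsub k n α L` as a linear subspace of `ℂⁿ`. -/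
def DsubSubmodule (k n : ℕ) (α : Fin n → Fin k → ℂ) (L : Finset (Fin n)) :
    Submodule ℂ (Fin n → ℂ) where
  carrier := Dsub k n α L
  add_mem' := by
    rintro s t ⟨p, hp⟩ ⟨q, hq⟩
    exact ⟨p + q, fun i hi => by rw [dotProduct_add, hp i hi, hq i hi, Pi.add_apply]⟩
  zero_mem' := ⟨0, fun i _ => by simp⟩
  smul_mem' := by
    rintro c t ⟨p, hp⟩
    exact ⟨c • p, fun i hi => by rw [dotProduct_smul, hp i hi, Pi.smul_apply]⟩

/-- If `t_1, …, t_d ∈ X = ⋂_{i=1}^r D_{L_i}` have weakly linearly independent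
`K_T`-vector sets, then the linear subspace `X` of `ℂⁿ` has dimension at least `k + d`.
Here `P h i` represents the (unique) point `P_{L_i}(t_h)`, so
`v_{i₀,j}(t_h) = P h j - P h i₀`. -/
theorem stmt_9 (k n : ℕ) (hk : 0 < k) (hkn : k < n)
    (α : Fin n → Fin k → ℂ)
    (hgen : ∀ S : Finset (Fin n), S.card = k →
      LinearIndependent ℂ (fun i : S => α i.1))
    (r : ℕ) (L : Fin r → Finset (Fin n))
    (hcard : ∀ i, (L i).card = k + 1)
    (i₀ : Fin r)
    (d : ℕ) (t : Fin d → Fin n → ℂ)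
    (ht : ∀ h : Fin d, t h ∈ ⋂ i : Fin r, Dsub k n α (L i))
    (P : Fin d → Fin r → Fin k → ℂ)
    (hP : ∀ (h : Fin d) (i : Fin r), ∀ p ∈ L i, α p ⬝ᵥ P h i = t h p)
    (hwli : ∀ a : Fin d → ℂ,
      (∀ j : Fin r, j ≠ i₀ → ∑ h : Fin d, a h • (P h j - P h i₀) = 0) →
      ∀ h : Fin d, a h = 0) :
    ∃ W : Submodule ℂ (Fin n → ℂ),
      (W : Set (Fin n → ℂ)) = ⋂ i : Fin r, Dsub k n α (L i) ∧
      k + d ≤ Module.finrank ℂ W := by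
  let W : Submodule ℂ (Fin n → ℂ) := ⨅ i, DsubSubmodule k n α (L i)
  have hW : (W : Set (Fin n → ℂ)) = ⋂ i : Fin r, Dsub k n α (L i) :=
    Submodule.coe_iInf _
  refine ⟨W, hW, ?_⟩
  let Φ : (Fin k → ℂ) × (Fin d → ℂ) →ₗ[ℂ] Fin n → ℂ :=
    (Matrix.mulVecLin (Matrix.of α)).coprod (Fintype.linearCombination ℂ t)
  have hΦ (x : Fin k → ℂ) (a : Fin d → ℂ) (j : Fin r) (p : Fin n) (hp : p ∈ L j) :
      α p ⬝ᵥ (x + ∑ h, a h • P h j) = Φ (x, a) p := by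
    simp only [Φ, LinearMap.coprod_apply, Matrix.mulVecLin_apply,
      Fintype.linearCombination_apply, Pi.add_apply, Finset.sum_apply, Pi.smul_apply,
      dotProduct_add, dotProduct_sum, dotProduct_smul, hP _ j p hp, Matrix.mulVec, Matrix.of_apply]
  have hmem (z : (Fin k → ℂ) × (Fin d → ℂ)) : Φ z ∈ W := by
    rw [← SetLike.mem_coe, hW]
    exact Set.mem_iInter.2 fun j => ⟨z.1 + ∑ h, z.2 h • P h j, hΦ z.1 z.2 j⟩
  have hinj : Function.Injective (Φ.codRestrict W hmem) := by
    rw [← LinearMap.ker_eq_bot, LinearMap.ker_codRestrict, LinearMap.ker_eq_bot']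
    rintro ⟨x, a⟩ hz
    have hpoint (j : Fin r) : x + ∑ h, a h • P h j = 0 :=
      eq_zero_of_dotProduct_eq_zero_of_generic hgen (by rw [hcard j]; exact k.le_succ)
        fun p hp => by rw [hΦ x a j p hp, hz, Pi.zero_apply]
    have ha : a = 0 := funext <| hwli a fun j _ => by
      simp only [smul_sub, Finset.sum_sub_distrib]
      rw [← add_sub_add_left_eq_sub _ _ x, hpoint j, hpoint i₀, sub_zero]
    subst ha
    simpa using hpoint i₀
  simpa using LinearMap.finrank_le_finrank_of_injective hinj
end

section
/- Let a, b ∈ ℝ with a, b ∉ {0, 1, −1} and a ≠ b, a ≠ −b, set (t_1,…,t_6) = (1,−1,a,−a,b,−b) and α_i = (1, t_i, t_i²) ∈ ℝ^3 for i = 1,…,6. Then the subspace D_{{1,2,3,4}} ∩ D_{{1,2,5,6}} ∩ D_{{3,4,5,6}} of ℝ^6 has dimension at least 4; that is, the intersection of these three discriminantal hyperplanes has codimension at most 2 (rank 2), strictly smaller than its multiplicity 3. -/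
open Matrix

/-- The normal vector `(1, t, t²)` of the cyclic arrangement. -/
def cyc (s : ℝ) : Fin 3 → ℝ := ![1, s, s ^ 2]

/-- `DsubR L` is the set of translations `t ∈ ℝ⁶` such that the affine planes
`H_i^{t_i} = {x ∈ ℝ³ : α_i ⬝ x = t_i}`, `i ∈ L`, have a common point, where
`α_1,…,α_6` are the normals of the cyclic arrangement with parameters
`(1,−1,a,−a,b,−b)`. -/
def DsubR (a b : ℝ) (L : Finset (Fin 6)) : Set (Fin 6 → ℝ) :=
  {t | ∃ p : Fin 3 → ℝ,
    ∀ i ∈ L, ![cyc 1, cyc (-1), cyc a, cyc (-a), cyc b, cyc (-b)] i ⬝ᵥ p = t i}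

/-- The planes with normals `cyc s`, `cyc (-s)`, `cyc r`, `cyc (-r)` and given levels
have a common point exactly when the levels satisfy a single linear relation. -/
theorem exists_cyc_dotProduct_eq_iff {s r : ℝ} (hs : s ≠ 0) (hr : r ≠ 0) (hsr : s ≠ r)
    (hsr' : s ≠ -r) (u u' v v' : ℝ) :
    (∃ p : Fin 3 → ℝ, cyc s ⬝ᵥ p = u ∧ cyc (-s) ⬝ᵥ p = u' ∧ cyc r ⬝ᵥ p = v ∧
      cyc (-r) ⬝ᵥ p = v') ↔ r * (u - u') = s * (v - v') := by
  simp only [cyc, dotProduct, Fin.sum_univ_three, cons_val_zero, cons_val_one, cons_val]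
  constructor
  · rintro ⟨p, rfl, rfl, rfl, rfl⟩
    ring
  · intro h
    have hsub : s - r ≠ 0 := sub_ne_zero.2 hsr
    have hadd : s + r ≠ 0 := fun h' => hsr' (eq_neg_of_add_eq_zero_left h')
    have hv : (u - u') / (2 * s) = (v - v') / (2 * r) := by
      field_simp
      linarith
    obtain ⟨q, hq⟩ : ∃ q, q = ((u + u') - (v + v')) / (2 * ((s - r) * (s + r))) := ⟨_, rfl⟩
    have hq' : 2 * (s ^ 2 - r ^ 2) * q = (u + u') - (v + v') := by
      rw [hq]
      field_simp
      ring
    obtain ⟨m, hm⟩ : ∃ m, m = (u - u') / (2 * s) := ⟨_, rfl⟩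
    have hms : 2 * s * m = u - u' := by
      rw [hm]
      field_simp
    have hmr : 2 * r * m = v - v' := by
      rw [hm, hv]
      field_simp
    refine ⟨![(u + u') / 2 - s ^ 2 * q, m, q], ?_, ?_, ?_, ?_⟩ <;>
      simp only [cons_val_zero, cons_val_one, cons_val] <;> linarith

/-- The intersection `D_{{1,2,3,4}} ∩ D_{{1,2,5,6}} ∩ D_{{3,4,5,6}}` of three
discriminantal hyperplanes of `B(6,3,A⁰)` for the cyclic arrangement has dimension at
least 4, i.e. codimension at most 2, strictly smaller than its multiplicity 3.
(Indices are 0-based: `{1,2,3,4} = {0,1,2,3}` etc.) -/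
theorem stmt_13 (a b : ℝ)
    (ha0 : a ≠ 0) (ha1 : a ≠ 1) (ha1' : a ≠ -1)
    (hb0 : b ≠ 0) (hb1 : b ≠ 1) (hb1' : b ≠ -1)
    (hab : a ≠ b) (hab' : a ≠ -b) :
    ∃ W : Submodule ℝ (Fin 6 → ℝ),
      (W : Set (Fin 6 → ℝ)) =
        DsubR a b {0, 1, 2, 3} ∩ DsubR a b {0, 1, 4, 5} ∩ DsubR a b {2, 3, 4, 5} ∧
      4 ≤ Module.finrank ℝ W := by
  have h₁ (t : Fin 6 → ℝ) : t ∈ DsubR a b {0, 1, 2, 3} ↔ a * (t 0 - t 1) = 1 * (t 2 - t 3) := by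
    rw [← exists_cyc_dotProduct_eq_iff one_ne_zero ha0 ha1.symm (by grind)]
    simp [DsubR]
  have h₂ (t : Fin 6 → ℝ) : t ∈ DsubR a b {0, 1, 4, 5} ↔ b * (t 0 - t 1) = 1 * (t 4 - t 5) := by
    rw [← exists_cyc_dotProduct_eq_iff one_ne_zero hb0 hb1.symm (by grind)]
    simp [DsubR]
  have h₃ (t : Fin 6 → ℝ) : t ∈ DsubR a b {2, 3, 4, 5} ↔ b * (t 2 - t 3) = a * (t 4 - t 5) := by
    rw [← exists_cyc_dotProduct_eq_iff ha0 hb0 hab hab']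
    simp [DsubR]
  let M : Matrix (Fin 2) (Fin 6) ℝ := !![a, -a, -1, 1, 0, 0; b, -b, 0, 0, -1, 1]
  refine ⟨LinearMap.ker M.mulVecLin, ?_, ?_⟩
  · ext t
    have hM : t ∈ LinearMap.ker M.mulVecLin ↔
        a * (t 0 - t 1) = t 2 - t 3 ∧ b * (t 0 - t 1) = t 4 - t 5 := by
      simp only [LinearMap.mem_ker, mulVecLin_apply, funext_iff, Fin.forall_fin_two, M, mulVec,
        dotProduct, Fin.sum_univ_six, of_apply, cons_val_zero, cons_val_one, cons_val,
        Pi.zero_apply]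
      constructor <;> rintro ⟨h, h'⟩ <;> constructor <;> linarith
    rw [SetLike.mem_coe, hM, Set.mem_inter_iff, Set.mem_inter_iff, h₁, h₂, h₃, one_mul, one_mul]
    refine ⟨fun h => ⟨h, ?_⟩, And.left⟩
    rw [← h.1, ← h.2]
    ring
  · have hrank := M.mulVecLin.finrank_range_add_finrank_ker
    have hrange := Submodule.finrank_le (LinearMap.range M.mulVecLin)
    simp only [Module.finrank_fin_fun] at hrank hrange
    omega
end

section
/- Let k = 8, n = 12, and let α_1,…,α_12 ∈ ℂ^8 be as listed in the context. Let L_1 = {1,…,12} \ {10,11,12}, L_2 = {1,…,12} \ {7,8,9}, L_3 = {1,…,12} \ {4,5,6}, L_4 = {1,…,12} \ {1,2,3}. Then the subspace D_{L_1} ∩ D_{L_2} ∩ D_{L_3} ∩ D_{L_4} of ℂ^{12} has dimension at least 9; in particular the intersection of the four discriminantal hyperplanes D_{L_1},…,D_{L_4} has codimension at most 3, strictly smaller than its multiplicity 4. -/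
open Matrix

/-- The normals of the arrangement of 12 hyperplanes in `ℂ⁸` of Example `B(12,8,A⁰)`. -/
def alpha12 : Fin 12 → Fin 8 → ℂ :=
  ![![0, 0, 1, 1, 0, 1, -1, 1],
    ![0, 0, 0, 1, 1, 1, 1, -1],
    ![0, 0, 1, 0, 0, 0, 1, 1],
    ![0, 1, 0, 1, 1, 1, 0, 1],
    ![0, 2, 0, -1, -1, 0, 1, -1],
    ![0, -1, 0, 2, 1, -1, -1, 1],
    ![1, 0, 0, 1, 0, -1, -1, 1],
    ![-1, 0, 0, 0, 2, 1, 1, 1],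
    ![-4, 0, 0, 0, 1, -1, 1, 1],
    ![1, 1, 1, -1, -1, -1, -1, 1],
    ![1, 1, 1, 2, 2, 2, 0, 3],
    ![-2, -2, -2, 3, 4, -5, 6, 7]]

/-- `Dsub12 L` is the set of translations `t ∈ ℂ¹²` such that the affine hyperplanes
`H_i^{t_i} = {x ∈ ℂ⁸ : α_i ⬝ x = t_i}`, `i ∈ L`, have a common point. -/
def Dsub12 (L : Finset (Fin 12)) : Set (Fin 12 → ℂ) :=
  {t | ∃ p : Fin 8 → ℂ, ∀ i ∈ L, alpha12 i ⬝ᵥ p = t i}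

/-- The set `Dsub12 L` as a linear subspace of `ℂ¹²`. -/
def dsubmodule12 (L : Finset (Fin 12)) : Submodule ℂ (Fin 12 → ℂ) where
  carrier := Dsub12 L
  zero_mem' := ⟨0, fun i _ => by simp⟩
  add_mem' := by
    rintro s t ⟨p, hp⟩ ⟨q, hq⟩
    exact ⟨p + q, fun i hi => by rw [dotProduct_add, hp i hi, hq i hi, Pi.add_apply]⟩
  smul_mem' := by
    rintro c t ⟨p, hp⟩
    exact ⟨c • p, fun i hi => by rw [dotProduct_smul, hp i hi, Pi.smul_apply]⟩

/-- The translations moving all twelve hyperplanes to a common point lie in every `D_L`. -/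
theorem mulVec_alpha12_mem (L : Finset (Fin 12)) (x : Fin 8 → ℂ) :
    Matrix.of alpha12 *ᵥ x ∈ dsubmodule12 L :=
  ⟨x, fun _ _ => rfl⟩

/-- A translation that is not induced by a common point of the twelve hyperplanes, but
agrees on the four index sets `L_j` with the ones induced by `0`, `e_1`, `e_2`, `e_3`. -/
def extraTranslation : Fin 12 → ℂ := ![0, 0, 0, 0, 0, 0, 0, 0, 0, 1, 1, -2]

/-- The intersection of the four discriminantal hyperplanes. -/
def dinter12 : Submodule ℂ (Fin 12 → ℂ) :=
  dsubmodule12 {0, 1, 2, 3, 4, 5, 6, 7, 8} ⊓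
  dsubmodule12 {0, 1, 2, 3, 4, 5, 9, 10, 11} ⊓
  dsubmodule12 {0, 1, 2, 6, 7, 8, 9, 10, 11} ⊓
  dsubmodule12 {3, 4, 5, 6, 7, 8, 9, 10, 11}

theorem extraTranslation_mem : extraTranslation ∈ dinter12 := by
  refine ⟨⟨⟨⟨0, ?_⟩, ⟨Pi.single 0 1, ?_⟩⟩, ⟨Pi.single 1 1, ?_⟩⟩, ⟨Pi.single 2 1, ?_⟩⟩ <;>
    simp [alpha12, extraTranslation]

/-- The first eight normals are linearly independent. -/
theorem eq_zero_of_alpha12_dotProduct_eq_zero {x : Fin 8 → ℂ}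
    (h : ∀ i : Fin 12, i < 8 → alpha12 i ⬝ᵥ x = 0) : x = 0 := by
  have h0 := h 0 (by decide)
  have h1 := h 1 (by decide)
  have h2 := h 2 (by decide)
  have h3 := h 3 (by decide)
  have h4 := h 4 (by decide)
  have h5 := h 5 (by decide)
  have h6 := h 6 (by decide)
  have h7 := h 7 (by decide)
  simp [alpha12, dotProduct, Fin.sum_univ_succ] at h0 h1 h2 h3 h4 h5 h6 h7
  funext j
  fin_cases j <;> simp
  · linear_combination (1 / 22) * h0 + (1 / 2) * h1 + (-1 / 22) * h2 + (-4 / 11) * h3 +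
      (-5 / 22) * h4 + (-9 / 11) * h5 + (27 / 22) * h6 + (5 / 22) * h7
  · linear_combination (3 / 11) * h0 + (-3 / 11) * h2 + (-2 / 11) * h3 + (7 / 11) * h4 +
      (1 / 11) * h5 + (4 / 11) * h6 + (4 / 11) * h7
  · linear_combination (27 / 22) * h0 + (1 / 2) * h1 + (-5 / 22) * h2 + (-20 / 11) * h3 +
      (19 / 22) * h4 + (-1 / 11) * h5 + (25 / 22) * h6 + (25 / 22) * h7
  · linear_combination (-4 / 11) * h0 + (4 / 11) * h2 + (10 / 11) * h3 + (-2 / 11) * h4 +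
      (6 / 11) * h5 + (-9 / 11) * h6 + (-9 / 11) * h7
  · linear_combination (15 / 22) * h0 + (1 / 2) * h1 + (-15 / 22) * h2 + (-16 / 11) * h3 +
      (13 / 22) * h4 + (-3 / 11) * h5 + (31 / 22) * h6 + (31 / 22) * h7
  · linear_combination (-1 / 11) * h0 + (1 / 11) * h2 + (8 / 11) * h3 + (-6 / 11) * h4 +
      (-4 / 11) * h5 + (-5 / 11) * h6 + (-5 / 11) * h7
  · linear_combination (-8 / 11) * h0 + (8 / 11) * h2 + (9 / 11) * h3 + (-4 / 11) * h4 +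
      (1 / 11) * h5 + (-7 / 11) * h6 + (-7 / 11) * h7
  · linear_combination (-1 / 2) * h0 + (-1 / 2) * h1 + (1 / 2) * h2 + h3 + (-1 / 2) * h4 +
      (-1 / 2) * h6 + (-1 / 2) * h7

/-- The linear map `(x, c) ↦ (α_i ⬝ x)_i + c u`, where `u` is `extraTranslation`. -/
def translationMap : (Fin 8 → ℂ) × ℂ →ₗ[ℂ] (Fin 12 → ℂ) :=
  (Matrix.of alpha12).mulVecLin.coprod (LinearMap.toSpanSingleton ℂ _ extraTranslation)

theorem translationMap_apply (x : Fin 8 → ℂ) (c : ℂ) :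
    translationMap (x, c) = Matrix.of alpha12 *ᵥ x + c • extraTranslation := by
  simp [translationMap]

theorem translationMap_mem (y : (Fin 8 → ℂ) × ℂ) : translationMap y ∈ dinter12 := by
  rw [← Prod.mk.eta (p := y), translationMap_apply]
  refine add_mem ?_ (dinter12.smul_mem _ extraTranslation_mem)
  exact ⟨⟨⟨mulVec_alpha12_mem _ _, mulVec_alpha12_mem _ _⟩, mulVec_alpha12_mem _ _⟩,
    mulVec_alpha12_mem _ _⟩

theorem translationMap_injective : Function.Injective translationMap := by
  rw [injective_iff_map_eq_zero]
  rintro ⟨x, c⟩ h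
  rw [translationMap_apply] at h
  have hx : x = 0 := by
    refine eq_zero_of_alpha12_dotProduct_eq_zero fun i hi => ?_
    have hu : extraTranslation i = 0 := by
      fin_cases i <;> first | rfl | exact absurd hi (by decide)
    have hi := congrFun h i
    rwa [Pi.add_apply, Pi.smul_apply, hu, smul_zero, add_zero] at hi
  subst hx
  have hc := congrFun h 9
  simp [extraTranslation] at hc
  simp [hc]

/-- For `L_1 = [12] \ {10,11,12}`, `L_2 = [12] \ {7,8,9}`, `L_3 = [12] \ {4,5,6}`,
`L_4 = [12] \ {1,2,3}` (written below with 0-based indices), the intersection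
`D_{L_1} ∩ D_{L_2} ∩ D_{L_3} ∩ D_{L_4}` has dimension at least 9, i.e. codimension at
most 3, strictly smaller than its multiplicity 4. -/
theorem stmt_14 :
    ∃ W : Submodule ℂ (Fin 12 → ℂ),
      (W : Set (Fin 12 → ℂ)) =
        Dsub12 {0, 1, 2, 3, 4, 5, 6, 7, 8} ∩
        Dsub12 {0, 1, 2, 3, 4, 5, 9, 10, 11} ∩
        Dsub12 {0, 1, 2, 6, 7, 8, 9, 10, 11} ∩
        Dsub12 {3, 4, 5, 6, 7, 8, 9, 10, 11} ∧
      9 ≤ Module.finrank ℂ W := by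
  refine ⟨dinter12, rfl, ?_⟩
  have h := LinearMap.finrank_le_finrank_of_injective
    (f := translationMap.codRestrict dinter12 translationMap_mem)
    ((LinearMap.injective_codRestrict_iff ..).2 translationMap_injective)
  simpa using h
end

section
/- Let k = 11, n = 16, and let α_1,…,α_16 ∈ ℂ^{11} be as listed in the context. Let L_1 = {1,…,16} \ {13,14,15,16}, L_2 = {1,…,16} \ {9,10,11,12}, L_3 = {1,…,16} \ {5,6,7,8}, L_4 = {1,…,16} \ {1,2,3,4}. Then the subspace D_{L_1} ∩ D_{L_2} ∩ D_{L_3} ∩ D_{L_4} of ℂ^{16} has dimension at least 13; in particular the intersection of the four discriminantal hyperplanes D_{L_1},…,D_{L_4} has codimension at most 3, strictly smaller than its multiplicity 4. -/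
open Matrix

/-- The normals of the arrangement of 16 hyperplanes in `ℂ¹¹` of Example `B(16,11,A⁰)`. -/
def alpha16 : Fin 16 → Fin 11 → ℂ :=
  ![![0, 0, 1, 0, 0, 1, 0, 0, 0, 1, -1],
    ![0, 0, -1, 0, 0, 1, 1, 1, 1, -1, 0],
    ![0, 0, 2, 0, 0, 1, 1, 0, 1, 1, 0],
    ![0, 0, 1, 0, 0, 1, 1, 0, 0, 0, 1],
    ![0, -1, 0, 0, 1, 0, 1, 1, 1, -1, 0],
    ![0, 1, 0, 0, 2, 0, 0, -1, -1, 0, 1],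
    ![0, 2, 0, 0, -1, 0, -1, 0, 0, 1, 1],
    ![0, -1, 0, 0, 2, 0, 1, 1, 1, 0, 0],
    ![1, 0, 0, -3, 0, 0, -1, -1, 1, 1, 1],
    ![2, 0, 0, 5, 0, 0, 1, -1, -1, 1, 1],
    ![3, 0, 0, 1, 0, 0, 1, -1, 2, 0, 1],
    ![1, 0, 0, 5, 0, 0, 1, 0, 1, 1, 0],
    ![1, 1, 1, -3, -3, -3, -1, -3, 2, -2, -1],
    ![1, 1, 1, 0, 0, 0, -2, 1, -8, 1, 1],
    ![0, 0, 0, -5, -5, -5, 1, 2, -3, -4, 7],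
    ![1, 1, 1, -2, -2, -2, 5, 6, 7, 8, 9]]

/-- `Dsub16 L` is the set of translations `t ∈ ℂ¹⁶` such that the affine hyperplanes
`H_i^{t_i} = {x ∈ ℂ¹¹ : α_i ⬝ x = t_i}`, `i ∈ L`, have a common point. -/
def Dsub16 (L : Finset (Fin 16)) : Set (Fin 16 → ℂ) :=
  {t | ∃ p : Fin 11 → ℂ, ∀ i ∈ L, alpha16 i ⬝ᵥ p = t i}

/-- The translations `Dsub16 L` as a subspace of `ℂ¹⁶`. -/
def dSubmodule16 (L : Finset (Fin 16)) : Submodule ℂ (Fin 16 → ℂ) where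
  carrier := Dsub16 L
  zero_mem' := ⟨0, fun i _ => by simp⟩
  add_mem' := by
    rintro s t ⟨p, hp⟩ ⟨q, hq⟩
    exact ⟨p + q, fun i hi => by rw [dotProduct_add, hp i hi, hq i hi, Pi.add_apply]⟩
  smul_mem' := by
    rintro c t ⟨p, hp⟩
    exact ⟨c • p, fun i hi => by rw [dotProduct_smul, hp i hi, Pi.smul_apply]⟩

/-- The first twelve hyperplanes are translated to pass through `p`, the last four through
`p + a e₀ + b e₃`. -/
def shift16 : (Fin 11 → ℂ) × ℂ × ℂ →ₗ[ℂ] (Fin 16 → ℂ) where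
  toFun z i := alpha16 i ⬝ᵥ
    (z.1 + if i < 12 then 0 else Pi.single 0 z.2.1 + Pi.single 3 z.2.2)
  map_add' y z := by
    ext i
    simp only [Pi.add_apply, ← dotProduct_add]
    congr 1
    split_ifs
    · simp
    · simp only [Prod.fst_add, Prod.snd_add, Pi.single_add]; abel
  map_smul' c z := by
    ext i
    simp only [Pi.smul_apply, ← dotProduct_smul]
    congr 1
    split_ifs
    · simp
    · simp only [Prod.smul_fst, Prod.smul_snd, Pi.single_smul, RingHom.id_apply, smul_add]

/-- The first twelve normals span `ℂ¹¹`. -/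
lemma eq_zero_of_dotProduct_alpha16 (p : Fin 11 → ℂ) (hp : ∀ i < 12, alpha16 i ⬝ᵥ p = 0) :
    p = 0 := by
  have h0 := hp 0 (by decide)
  have h1 := hp 1 (by decide)
  have h2 := hp 2 (by decide)
  have h3 := hp 3 (by decide)
  have h4 := hp 4 (by decide)
  have h5 := hp 5 (by decide)
  have h6 := hp 6 (by decide)
  have h7 := hp 7 (by decide)
  have h8 := hp 8 (by decide)
  have h9 := hp 9 (by decide)
  have h10 := hp 10 (by decide)
  have h11 := hp 11 (by decide)
  simp [alpha16, dotProduct, Fin.sum_univ_succ] at h0 h1 h2 h3 h4 h5 h6 h7 h8 h9 h10 h11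
  ext j
  fin_cases j <;> simp <;> grind

lemma shift16_injective : Function.Injective shift16 := by
  rw [← LinearMap.ker_eq_bot, LinearMap.ker_eq_bot']
  rintro ⟨p, a, b⟩ h
  obtain rfl : p = 0 := eq_zero_of_dotProduct_alpha16 p fun i hi => by
    simpa [shift16, hi] using congrFun h i
  have h13 : a = 0 := by simpa [shift16, alpha16] using congrFun h 13
  have h14 : b = 0 := by simpa [shift16, alpha16] using congrFun h 14
  simp [h13, h14]

lemma shift16_mem (z : (Fin 11 → ℂ) × ℂ × ℂ) :
    shift16 z ∈
      Dsub16 {0, 1, 2, 3, 4, 5, 6, 7, 8, 9, 10, 11} ∩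
      Dsub16 {0, 1, 2, 3, 4, 5, 6, 7, 12, 13, 14, 15} ∩
      Dsub16 {0, 1, 2, 3, 8, 9, 10, 11, 12, 13, 14, 15} ∩
      Dsub16 {4, 5, 6, 7, 8, 9, 10, 11, 12, 13, 14, 15} := by
  obtain ⟨p, a, b⟩ := z
  refine ⟨⟨⟨⟨p, ?_⟩, ⟨p + (Pi.single 0 a + Pi.single 3 b), ?_⟩⟩,
    ⟨p + (Pi.single 1 a + Pi.single 4 b), ?_⟩⟩, ⟨p + (Pi.single 2 a + Pi.single 5 b), ?_⟩⟩
  all_goals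
    simp only [Finset.mem_insert, Finset.mem_singleton]
    rintro i (rfl | rfl | rfl | rfl | rfl | rfl | rfl | rfl | rfl | rfl | rfl | rfl) <;>
      simp [shift16, alpha16, dotProduct_add, Fin.lt_def]

/-- For `L_1 = [16] \ {13,14,15,16}`, `L_2 = [16] \ {9,10,11,12}`,
`L_3 = [16] \ {5,6,7,8}`, `L_4 = [16] \ {1,2,3,4}` (written below with 0-based indices),
the intersection `D_{L_1} ∩ D_{L_2} ∩ D_{L_3} ∩ D_{L_4}` has dimension at least 13, i.e.
codimension at most 3, strictly smaller than its multiplicity 4. -/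
theorem stmt_15 :
    ∃ W : Submodule ℂ (Fin 16 → ℂ),
      (W : Set (Fin 16 → ℂ)) =
        Dsub16 {0, 1, 2, 3, 4, 5, 6, 7, 8, 9, 10, 11} ∩
        Dsub16 {0, 1, 2, 3, 4, 5, 6, 7, 12, 13, 14, 15} ∩
        Dsub16 {0, 1, 2, 3, 8, 9, 10, 11, 12, 13, 14, 15} ∩
        Dsub16 {4, 5, 6, 7, 8, 9, 10, 11, 12, 13, 14, 15} ∧
      13 ≤ Module.finrank ℂ W := by
  refine ⟨dSubmodule16 _ ⊓ dSubmodule16 _ ⊓ dSubmodule16 _ ⊓ dSubmodule16 _, rfl, ?_⟩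
  have h := LinearMap.finrank_range_of_inj shift16_injective
  simp only [Module.finrank_prod, Module.finrank_fin_fun, Module.finrank_self] at h
  refine h.symm.le.trans (Submodule.finrank_mono ?_)
  rintro _ ⟨z, rfl⟩
  exact shift16_mem z
end

section
/- Let k = 3, n = 10, and let α_1,…,α_10 ∈ ℂ^3 be as listed in the context. Let L_1 = {1,2,3,4}, L_2 = {1,5,6,7}, L_3 = {2,5,8,9}, L_4 = {3,6,8,10}, L_5 = {4,7,9,10}. Then the subspace D_{L_1} ∩ D_{L_2} ∩ D_{L_3} ∩ D_{L_4} ∩ D_{L_5} of ℂ^{10} has dimension at least 6; in particular the intersection of the five discriminantal hyperplanes D_{L_1},…,D_{L_5} has codimension at most 4, strictly smaller than its multiplicity 5. -/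
open Matrix

/-- The normals of the arrangement of 10 hyperplanes in `ℂ³` of Example `B(10,3,A⁰)`. -/
def alpha10 : Fin 10 → Fin 3 → ℂ :=
  ![![0, 10, 3],
    ![20, 0, -9],
    ![2, -3, 0],
    ![3, 1, 0],
    ![0, 0, 1],
    ![1, -1, 1],
    ![1, 2, 2],
    ![4, -1, -3],
    ![314, -40, -197],
    ![139, 30, -43]]

/-- `Dsub10 L` is the set of translations `t ∈ ℂ¹⁰` such that the affine hyperplanes
`H_i^{t_i} = {x ∈ ℂ³ : α_i ⬝ x = t_i}`, `i ∈ L`, have a common point. -/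
def Dsub10 (L : Finset (Fin 10)) : Set (Fin 10 → ℂ) :=
  {t | ∃ p : Fin 3 → ℂ, ∀ i ∈ L, alpha10 i ⬝ᵥ p = t i}

/-- If the normals indexed by `a, b, c` are linearly independent, and `r` is a linear relation
between the normals indexed by `a, b, c, d` with `r 3 ≠ 0`, then `Dsub10 {a, b, c, d}` is cut out
by the relation `r`. -/
theorem mem_Dsub10_iff {a b c d : Fin 10} (r : Fin 4 → ℂ)
    (hdet : (of ![alpha10 a, alpha10 b, alpha10 c]).det ≠ 0) (hr : r 3 ≠ 0)
    (hrel : r 0 • alpha10 a + r 1 • alpha10 b + r 2 • alpha10 c + r 3 • alpha10 d = 0)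
    (t : Fin 10 → ℂ) :
    t ∈ Dsub10 {a, b, c, d} ↔ r 0 * t a + r 1 * t b + r 2 * t c + r 3 * t d = 0 := by
  have hdot (p : Fin 3 → ℂ) : r 0 * (alpha10 a ⬝ᵥ p) + r 1 * (alpha10 b ⬝ᵥ p) +
      r 2 * (alpha10 c ⬝ᵥ p) + r 3 * (alpha10 d ⬝ᵥ p) = 0 := by
    simpa only [add_dotProduct, smul_dotProduct, zero_dotProduct, smul_eq_mul] using
      congrArg (· ⬝ᵥ p) hrel
  simp only [Dsub10, Set.mem_ofPred_eq, Finset.mem_insert, Finset.mem_singleton, forall_eq_or_imp,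
    forall_eq]
  constructor
  · rintro ⟨p, ha, hb, hc, hd⟩
    rw [← ha, ← hb, ← hc, ← hd, hdot]
  · intro ht
    set M := of ![alpha10 a, alpha10 b, alpha10 c]
    set p := M⁻¹ *ᵥ ![t a, t b, t c]
    have hp : M *ᵥ p = ![t a, t b, t c] := by
      rw [mulVec_mulVec, mul_nonsing_inv M (Ne.isUnit hdet), one_mulVec]
    have ha : alpha10 a ⬝ᵥ p = t a := congrFun hp 0
    have hb : alpha10 b ⬝ᵥ p = t b := congrFun hp 1
    have hc : alpha10 c ⬝ᵥ p = t c := congrFun hp 2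
    refine ⟨p, ha, hb, hc, mul_left_cancel₀ hr ?_⟩
    have h := hdot p
    rw [ha, hb, hc] at h
    linear_combination h - ht

/-- The equations of the hyperplanes `Dsub10 {0, 4, 5, 6}`, `Dsub10 {1, 4, 7, 8}`,
`Dsub10 {2, 5, 7, 9}` and `Dsub10 {3, 6, 8, 9}`. -/
def discriminantalEquations : Matrix (Fin 4) (Fin 10) ℂ :=
  !![3, 0, 0, 0, 1, 10, -10, 0, 0, 0;
     0, 77, 0, 0, -77, 0, 0, 400, -10, 0;
     0, 0, 49, 0, 0, -77, 0, -40, 0, 1;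
     0, 0, 0, 84, 0, 0, -77, 0, -1, 1]

theorem mem_ker_discriminantalEquations_iff (t : Fin 10 → ℂ) :
    t ∈ LinearMap.ker discriminantalEquations.mulVecLin ↔
      (3 * t 0 + 1 * t 4 + 10 * t 5 + -10 * t 6 = 0) ∧
      (77 * t 1 + -77 * t 4 + 400 * t 7 + -10 * t 8 = 0) ∧
      (49 * t 2 + -77 * t 5 + -40 * t 7 + 1 * t 9 = 0) ∧
      (84 * t 3 + -77 * t 6 + -1 * t 8 + 1 * t 9 = 0) := by
  rw [LinearMap.mem_ker, mulVecLin_apply, funext_iff]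
  simp [Fin.forall_fin_succ, discriminantalEquations, mulVec, dotProduct, Fin.sum_univ_succ,
    add_assoc]

theorem six_le_finrank_ker_discriminantalEquations :
    6 ≤ Module.finrank ℂ (LinearMap.ker discriminantalEquations.mulVecLin) := by
  have h := discriminantalEquations.mulVecLin.finrank_range_add_finrank_ker
  have hle := (LinearMap.range discriminantalEquations.mulVecLin).finrank_le
  simp only [Module.finrank_fin_fun] at h hle
  omega

/-- For `L_1 = {1,2,3,4}`, `L_2 = {1,5,6,7}`, `L_3 = {2,5,8,9}`, `L_4 = {3,6,8,10}`,
`L_5 = {4,7,9,10}` (written below with 0-based indices), the intersection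
`D_{L_1} ∩ ⋯ ∩ D_{L_5}` has dimension at least 6, i.e. codimension at most 4, strictly
smaller than its multiplicity 5. -/
theorem stmt_16 :
    ∃ W : Submodule ℂ (Fin 10 → ℂ),
      (W : Set (Fin 10 → ℂ)) =
        Dsub10 {0, 1, 2, 3} ∩ Dsub10 {0, 4, 5, 6} ∩ Dsub10 {1, 4, 7, 8} ∩
        Dsub10 {2, 5, 7, 9} ∩ Dsub10 {3, 6, 8, 9} ∧
      6 ≤ Module.finrank ℂ W := by
  refine ⟨LinearMap.ker discriminantalEquations.mulVecLin, ?_,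
    six_le_finrank_ker_discriminantalEquations⟩
  ext t
  have h0123 := mem_Dsub10_iff (a := 0) (b := 1) (c := 2) (d := 3) ![-33, -11, -70, 120]
    (by simp [alpha10, det_fin_three]; norm_num) (by simp)
    (by ext j; fin_cases j <;> simp [alpha10] <;> norm_num) t
  have h0456 := mem_Dsub10_iff (a := 0) (b := 4) (c := 5) (d := 6) ![3, 1, 10, -10]
    (by simp [alpha10, det_fin_three]) (by simp)
    (by ext j; fin_cases j <;> simp [alpha10] <;> norm_num) t
  have h1478 := mem_Dsub10_iff (a := 1) (b := 4) (c := 7) (d := 8) ![77, -77, 400, -10]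
    (by simp [alpha10, det_fin_three]) (by simp)
    (by ext j; fin_cases j <;> simp [alpha10] <;> norm_num) t
  have h2579 := mem_Dsub10_iff (a := 2) (b := 5) (c := 7) (d := 9) ![49, -77, -40, 1]
    (by simp [alpha10, det_fin_three]; norm_num) (by simp)
    (by ext j; fin_cases j <;> simp [alpha10] <;> norm_num) t
  have h3689 := mem_Dsub10_iff (a := 3) (b := 6) (c := 8) (d := 9) ![84, -77, -1, 1]
    (by simp [alpha10, det_fin_three]; norm_num) (by simp)
    (by ext j; fin_cases j <;> simp [alpha10] <;> norm_num) t
  simp only [cons_val] at h0123 h0456 h1478 h2579 h3689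
  rw [SetLike.mem_coe, mem_ker_discriminantalEquations_iff, Set.mem_inter_iff, Set.mem_inter_iff,
    Set.mem_inter_iff, Set.mem_inter_iff, h0123, h0456, h1478, h2579, h3689]
  refine ⟨fun ⟨h₁, h₂, h₃, h₄⟩ ↦ ⟨⟨⟨⟨?_, h₁⟩, h₂⟩, h₃⟩, h₄⟩,
    fun ⟨⟨⟨⟨_, h₁⟩, h₂⟩, h₃⟩, h₄⟩ ↦ ⟨h₁, h₂, h₃, h₄⟩⟩
  linear_combination -11 * h₁ - (1 / 7) * h₂ - (10 / 7) * h₃ + (10 / 7) * h₄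
end
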